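/- arXiv:1611.07774 — 4 statements merged into one kernel-verified Lean document; each statement's English description precedes it below -/
import Mathlib

section
/- Let β > 0, b, σ ∈ ℝ, and define ψ(s) = ρ_β((s − b)/√(s + σ²)) for s > −σ², where ρ_β is the Talwar loss. If s > −σ² satisfies |s − b|/√(s + σ²) < β, then ψ is twice differentiable at s with ψ′(s) = (1/2)·(1 − (b + σ²)²/(s + σ²)²) and ψ″(s) = (b + σ²)²/(s + σ²)³ ≥ 0. -/
/-- The Talwar loss function with parameter β > 0. -/
noncomputable def talwar (β : ℝ) (t : ℝ) : ℝ := if |t| ≤ β then t ^ 2 / 2 else β ^ 2 / 2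

/-!
The condition `|s - b| / √(s + σ²) < β` is open, so near `s` the fidelity is half of
`(x - b)² / (x + σ²) = (x + σ²) - 2 (b + σ²) + (b + σ²)² / (x + σ²)`, and only the last term
contributes to the second derivative.
-/

open Filter Topology

theorem sub_sq_div_add_eq {K : Type*} [Field K] {b c x : K} (hx : x + c ≠ 0) :
    (x - b) ^ 2 / (x + c) = (x + c) - 2 * (b + c) + (b + c) ^ 2 / (x + c) := by
  field_simp
  ring

section RationalFunction

variable {𝕜 : Type*} [NontriviallyNormedField 𝕜] {b c x : 𝕜}

theorem hasDerivAt_sub_sq_div_add (hx : x + c ≠ 0) :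
    HasDerivAt (fun y ↦ (y - b) ^ 2 / (y + c)) (1 - (b + c) ^ 2 / (x + c) ^ 2) x := by
  have hadd : HasDerivAt (fun y ↦ y + c) 1 x := (hasDerivAt_id' x).add_const c
  have hexpanded : HasDerivAt (fun y ↦ (y + c) - 2 * (b + c) + (b + c) ^ 2 / (y + c))
      (1 - (b + c) ^ 2 / (x + c) ^ 2) x :=
    ((hadd.sub_const _).add ((hasDerivAt_const x _).fun_div hadd hx)).congr_deriv (by ring)
  refine hexpanded.congr_of_eventuallyEq ?_
  filter_upwards [hadd.continuousAt.eventually_ne hx] with y hy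
  exact sub_sq_div_add_eq hy

theorem hasDerivAt_deriv_sub_sq_div_add (hx : x + c ≠ 0) :
    HasDerivAt (deriv fun y ↦ (y - b) ^ 2 / (y + c)) (2 * ((b + c) ^ 2 / (x + c) ^ 3)) x := by
  have hadd : HasDerivAt (fun y ↦ y + c) 1 x := (hasDerivAt_id' x).add_const c
  have hsq : HasDerivAt (fun y ↦ (y + c) ^ 2) (2 * (x + c)) x := by
    simpa using hadd.fun_pow 2
  have hformula : HasDerivAt (fun y ↦ 1 - (b + c) ^ 2 / (y + c) ^ 2)
      (2 * ((b + c) ^ 2 / (x + c) ^ 3)) x :=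
    (((hasDerivAt_const x _).fun_div hsq (pow_ne_zero 2 hx)).const_sub 1).congr_deriv
      (by field_simp; ring)
  refine hformula.congr_of_eventuallyEq ?_
  filter_upwards [hadd.continuousAt.eventually_ne hx] with y hy
  exact (hasDerivAt_sub_sq_div_add hy).deriv

end RationalFunction

theorem talwar_eventuallyEq_sq_div_two {β t : ℝ} (ht : |t| < β) :
    talwar β =ᶠ[𝓝 t] fun u ↦ u ^ 2 / 2 := by
  filter_upwards [continuous_abs.continuousAt.eventually_lt_const ht] with u hu
  exact if_pos hu.le

/-- The robust scalar fidelity `ψ` with data value `b`, parametrized by the noise variance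
`c = σ²` rather than by `σ`. -/
noncomputable def talwarFidelity (β b c s : ℝ) : ℝ :=
  talwar β ((s - b) / √(s + c))

section TalwarFidelity

variable {β b c s : ℝ}

theorem talwarFidelity_eventuallyEq (hs : 0 < s + c) (hin : |(s - b) / √(s + c)| < β) :
    talwarFidelity β b c =ᶠ[𝓝 s] fun x ↦ (x - b) ^ 2 / (x + c) / 2 := by
  have hresidual : ContinuousAt (fun x ↦ (x - b) / √(x + c)) s :=
    ContinuousAt.div (by fun_prop) (by fun_prop) (Real.sqrt_pos.2 hs).ne'
  have hpos : ∀ᶠ x in 𝓝 s, 0 < x + c :=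
    (continuous_add_const c).continuousAt.eventually_const_lt hs
  filter_upwards [hresidual.eventually (talwar_eventuallyEq_sq_div_two hin), hpos] with x hx hxc
  rw [talwarFidelity, hx, div_pow, Real.sq_sqrt hxc.le]

theorem hasDerivAt_talwarFidelity (hs : 0 < s + c) (hin : |(s - b) / √(s + c)| < β) :
    HasDerivAt (talwarFidelity β b c) ((1 / 2) * (1 - (b + c) ^ 2 / (s + c) ^ 2)) s :=
  (((hasDerivAt_sub_sq_div_add hs.ne').div_const 2).congr_deriv (by ring)).congr_of_eventuallyEq
    (talwarFidelity_eventuallyEq hs hin)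

theorem hasDerivAt_deriv_talwarFidelity (hs : 0 < s + c) (hin : |(s - b) / √(s + c)| < β) :
    HasDerivAt (deriv (talwarFidelity β b c)) ((b + c) ^ 2 / (s + c) ^ 3) s := by
  have hderiv : deriv (talwarFidelity β b c) =ᶠ[𝓝 s]
      fun x ↦ deriv (fun y ↦ (y - b) ^ 2 / (y + c)) x / 2 :=
    (talwarFidelity_eventuallyEq hs hin).deriv.trans (.of_eq (funext fun _ ↦ deriv_div_const _))
  exact (((hasDerivAt_deriv_sub_sq_div_add hs.ne').div_const 2).congr_deriv
    (by ring)).congr_of_eventuallyEq hderiv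

end TalwarFidelity

/-- Inside the Talwar threshold, the robust scalar fidelity
ψ(s) = ρ_β((s − b)/√(s + σ²)) is twice differentiable with
ψ′(s) = (1/2)(1 − (b + σ²)²/(s + σ²)²) and ψ″(s) = (b + σ²)²/(s + σ²)³ ≥ 0. -/
theorem talwar_fidelity_inside_threshold (β b σ s : ℝ) (hβ : 0 < β)
    (hs : s > -σ ^ 2)
    (hin : |s - b| / Real.sqrt (s + σ ^ 2) < β) :
    HasDerivAt (fun s : ℝ => talwar β ((s - b) / Real.sqrt (s + σ ^ 2)))
      ((1 / 2) * (1 - (b + σ ^ 2) ^ 2 / (s + σ ^ 2) ^ 2)) s ∧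
    HasDerivAt (deriv (fun s : ℝ => talwar β ((s - b) / Real.sqrt (s + σ ^ 2))))
      ((b + σ ^ 2) ^ 2 / (s + σ ^ 2) ^ 3) s ∧
    0 ≤ (b + σ ^ 2) ^ 2 / (s + σ ^ 2) ^ 3 := by
  have hpos : 0 < s + σ ^ 2 := by linarith
  have hresidual : |(s - b) / √(s + σ ^ 2)| < β := by
    rwa [abs_div, abs_of_nonneg (Real.sqrt_nonneg _)]
  exact ⟨hasDerivAt_talwarFidelity hpos hresidual,
    hasDerivAt_deriv_talwarFidelity hpos hresidual, by positivity⟩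
end

section
/- Let β > 0 and let ρ be the Huber loss with parameter β. Fix b ≥ 0 and σ ∈ ℝ, and define ψ(s) = ρ((s − b)/√(s + σ²)) for s > −σ². If s > 0 satisfies (s − b)/√(s + σ²) > β, then ψ is twice differentiable at s with ψ″(s) = −β(s + 3b + 4σ²)/(4(s + σ²)^{5/2}) < 0. In particular, ψ is not convex on any neighborhood of such a point. -/
/-- The Huber loss function with parameter β > 0. -/
noncomputable def huber (β : ℝ) (t : ℝ) : ℝ :=
  if |t| ≤ β then t ^ 2 / 2 else β * |t| - β ^ 2 / 2

/-!
With `u = s + σ²`, the scaled residual is `(s - b) / √u = √u - (b + σ²) / √u`, a sum of two concave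
functions of `u` as soon as `b ≥ -σ²`, and its derivatives come from the power rule. Beyond the
threshold the Huber loss is affine with slope `β`, so there the fidelity has `β` times the second
derivative of the residual. A convex function has a nondecreasing derivative, so a negative second
derivative at a point rules out convexity around it.
-/

open Filter Topology

section SecondDerivative

variable {f : ℝ → ℝ} {x f'' : ℝ} {U : Set ℝ}

theorem exists_ball_monotoneOn_deriv_of_convexOn (hU : U ∈ 𝓝 x) (hconv : ConvexOn ℝ U f)
    (hf : ∀ᶠ y in 𝓝 x, DifferentiableAt ℝ f y) :
    ∃ r > 0, MonotoneOn (deriv f) (Metric.ball x r) := by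
  obtain ⟨r, hr, hball⟩ := Metric.mem_nhds_iff.mp (inter_mem hU hf)
  have hsub : Metric.ball x r ⊆ U := fun _ hy => (hball hy).1
  exact ⟨r, hr, (hconv.subset hsub (convex_ball x r)).monotoneOn_deriv fun _ hy => (hball hy).2⟩

theorem not_convexOn_of_hasDerivAt_deriv_neg (hU : U ∈ 𝓝 x)
    (hf : ∀ᶠ y in 𝓝 x, DifferentiableAt ℝ f y) (hf'' : HasDerivAt (deriv f) f'' x)
    (hneg : f'' < 0) : ¬ ConvexOn ℝ U f := by
  intro hconv
  obtain ⟨r, hr, hmono⟩ := exists_ball_monotoneOn_deriv_of_convexOn hU hconv hf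
  have hnonneg : 0 ≤ derivWithin (deriv f) (Metric.ball x r) x := hmono.derivWithin_nonneg
  rw [derivWithin_of_mem_nhds (Metric.ball_mem_nhds x hr), hf''.deriv] at hnonneg
  exact hneg.not_ge hnonneg

end SecondDerivative

theorem huber_of_lt {β t : ℝ} (hβ : 0 ≤ β) (ht : β < t) : huber β t = β * t - β ^ 2 / 2 := by
  have habs : |t| = t := abs_of_pos (hβ.trans_lt ht)
  rw [huber, habs, if_neg ht.not_ge]

theorem huber_comp_eventuallyEq {X : Type*} [TopologicalSpace X] {β : ℝ} {f : X → ℝ} {x : X}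
    (hβ : 0 ≤ β) (hf : ContinuousAt f x) (hx : β < f x) :
    (fun y => huber β (f y)) =ᶠ[𝓝 x] fun y => β * f y - β ^ 2 / 2 :=
  (hf.eventually_const_lt hx).mono fun _ => huber_of_lt hβ

theorem differentiableAt_huber_comp {E : Type*} [NormedAddCommGroup E] [NormedSpace ℝ E] {β : ℝ}
    {f : E → ℝ} {x : E} (hβ : 0 ≤ β) (hf : DifferentiableAt ℝ f x) (hx : β < f x) :
    DifferentiableAt ℝ (fun y => huber β (f y)) x :=
  ((hf.const_mul β).sub_const (β ^ 2 / 2)).congr_of_eventuallyEq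
    (huber_comp_eventuallyEq hβ hf.continuousAt hx)

theorem hasDerivAt_deriv_huber_comp {β x f'' : ℝ} {f : ℝ → ℝ} (hβ : 0 ≤ β)
    (hf : ContinuousAt f x) (hx : β < f x) (hf'' : HasDerivAt (deriv f) f'' x) :
    HasDerivAt (deriv fun y => huber β (f y)) (β * f'') x := by
  have hderiv : (deriv fun y => β * f y - β ^ 2 / 2) = fun y => β * deriv f y := by
    ext y
    rw [deriv_sub_const, deriv_const_mul_field]
  refine HasDerivAt.congr_of_eventuallyEq ?_ (huber_comp_eventuallyEq hβ hf hx).deriv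
  rw [hderiv]
  exact hf''.const_mul β

/-- The residual `s - b` of the data value `b`, divided by the standard deviation `√(s + c)` of
noise with variance `s + c`; the theorem takes `c = σ²`. It is `0` for `s + c ≤ 0`. -/
noncomputable def scaledResidual (b c s : ℝ) : ℝ :=
  (s - b) / √(s + c)

section ScaledResidual

variable {b c x : ℝ}

theorem scaledResidual_eq_rpow_sub (hx : 0 ≤ x + c) :
    scaledResidual b c x = (x + c) ^ (1 / 2 : ℝ) - (b + c) * (x + c) ^ (-1 / 2 : ℝ) := by
  rw [scaledResidual, ← add_sub_add_right_eq_sub x b c, sub_div, Real.div_sqrt, neg_div,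
    Real.rpow_neg hx, ← Real.sqrt_eq_rpow, div_eq_mul_inv]

theorem eventually_add_pos (hx : 0 < x + c) : ∀ᶠ y in 𝓝 x, 0 < y + c :=
  (continuousAt_id.add continuousAt_const).eventually_const_lt hx

theorem hasDerivAt_add_rpow (p : ℝ) (hx : x + c ≠ 0) :
    HasDerivAt (fun y => (y + c) ^ p) (p * (x + c) ^ (p - 1)) x :=
  (Real.hasDerivAt_rpow_const (.inl hx)).comp_add_const x c

theorem hasDerivAt_scaledResidual (hx : 0 < x + c) :
    HasDerivAt (scaledResidual b c)
      ((x + c) ^ (-1 / 2 : ℝ) / 2 + (b + c) / 2 * (x + c) ^ (-3 / 2 : ℝ)) x := by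
  have hpow := (hasDerivAt_add_rpow (1 / 2) hx.ne').sub
    ((hasDerivAt_add_rpow (-1 / 2) hx.ne').const_mul (b + c))
  refine (hpow.congr_deriv ?_).congr_of_eventuallyEq
    ((eventually_add_pos hx).mono fun _ hy => scaledResidual_eq_rpow_sub hy.le)
  rw [show (1 / 2 - 1 : ℝ) = -1 / 2 by norm_num, show (-1 / 2 - 1 : ℝ) = -3 / 2 by norm_num]
  ring

theorem hasDerivAt_deriv_scaledResidual (hx : 0 < x + c) :
    HasDerivAt (deriv (scaledResidual b c))
      (-(x + 3 * b + 4 * c) / (4 * (x + c) ^ (5 / 2 : ℝ))) x := by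
  have hpow := ((hasDerivAt_add_rpow (-1 / 2) hx.ne').div_const 2).add
    ((hasDerivAt_add_rpow (-3 / 2) hx.ne').const_mul ((b + c) / 2))
  refine (hpow.congr_deriv ?_).congr_of_eventuallyEq
    ((eventually_add_pos hx).mono fun _ hy => (hasDerivAt_scaledResidual hy).deriv)
  have hthree : (x + c) ^ (-3 / 2 : ℝ) = (x + c) * (x + c) ^ (-5 / 2 : ℝ) := by
    rw [← Real.rpow_one_add' hx.le (by norm_num)]
    norm_num
  have hfive : (x + c) ^ (-5 / 2 : ℝ) = ((x + c) ^ (5 / 2 : ℝ))⁻¹ := by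
    rw [neg_div, Real.rpow_neg hx.le]
  rw [show (-1 / 2 - 1 : ℝ) = -3 / 2 by norm_num, show (-3 / 2 - 1 : ℝ) = -5 / 2 by norm_num,
    hthree, hfive]
  field_simp
  ring

theorem add_pos_of_scaledResidual_pos (h : 0 < scaledResidual b c x) : 0 < x + c := by
  contrapose! h
  rw [scaledResidual, Real.sqrt_eq_zero_of_nonpos h, div_zero]

end ScaledResidual

/-- The robust scalar fidelity `ψ` of the data value `b`: the Huber loss of the scaled residual,
with `c` in the role of `σ²`. -/
noncomputable def huberFidelity (β b c s : ℝ) : ℝ :=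
  huber β (scaledResidual b c s)

section HuberFidelity

variable {β b c s : ℝ}

theorem hasDerivAt_deriv_huberFidelity (hβ : 0 ≤ β) (hs : β < scaledResidual b c s) :
    HasDerivAt (deriv (huberFidelity β b c))
      (-(β * (s + 3 * b + 4 * c)) / (4 * (s + c) ^ (5 / 2 : ℝ))) s := by
  have hpos : 0 < s + c := add_pos_of_scaledResidual_pos (hβ.trans_lt hs)
  exact (hasDerivAt_deriv_huber_comp hβ (hasDerivAt_scaledResidual hpos).continuousAt hs
    (hasDerivAt_deriv_scaledResidual hpos)).congr_deriv (by ring)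

theorem eventually_differentiableAt_huberFidelity (hβ : 0 ≤ β) (hs : β < scaledResidual b c s) :
    ∀ᶠ y in 𝓝 s, DifferentiableAt ℝ (huberFidelity β b c) y := by
  have hpos : 0 < s + c := add_pos_of_scaledResidual_pos (hβ.trans_lt hs)
  have hcont : ContinuousAt (scaledResidual b c) s := (hasDerivAt_scaledResidual hpos).continuousAt
  filter_upwards [eventually_add_pos hpos, hcont.eventually_const_lt hs] with y hypos hy
  exact differentiableAt_huber_comp hβ (hasDerivAt_scaledResidual hypos).differentiableAt hy

theorem huberFidelity_second_deriv_value_neg (hβ : 0 < β) (hbc : 0 ≤ b + c) (hs : 0 < s + c) :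
    -(β * (s + 3 * b + 4 * c)) / (4 * (s + c) ^ (5 / 2 : ℝ)) < 0 := by
  have hnum : 0 < s + 3 * b + 4 * c := by linarith
  exact div_neg_of_neg_of_pos (neg_neg_of_pos (mul_pos hβ hnum)) (by positivity)

theorem huber_fidelity_nonconvex_beyond_threshold_general (hβ : 0 < β) (hbc : 0 ≤ b + c)
    (hs : β < scaledResidual b c s) :
    HasDerivAt (deriv (huberFidelity β b c))
      (-(β * (s + 3 * b + 4 * c)) / (4 * (s + c) ^ (5 / 2 : ℝ))) s ∧
    -(β * (s + 3 * b + 4 * c)) / (4 * (s + c) ^ (5 / 2 : ℝ)) < 0 ∧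
    ∀ U ∈ 𝓝 s, ¬ ConvexOn ℝ U (huberFidelity β b c) := by
  have hderiv := hasDerivAt_deriv_huberFidelity hβ.le hs
  have hneg := huberFidelity_second_deriv_value_neg hβ hbc
    (add_pos_of_scaledResidual_pos (hβ.trans hs))
  have hdiff := eventually_differentiableAt_huberFidelity hβ.le hs
  exact ⟨hderiv, hneg, fun _ hU => not_convexOn_of_hasDerivAt_deriv_neg hU hdiff hderiv hneg⟩

end HuberFidelity

/-- Beyond the Huber threshold (for positive scaled residuals), the robust scalar fidelity
ψ(s) = ρ((s − b)/√(s + σ²)) has strictly negative second derivative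
ψ″(s) = −β(s + 3b + 4σ²)/(4(s + σ²)^{5/2}); in particular ψ is not convex on any
neighborhood of such a point. -/
theorem huber_fidelity_nonconvex_beyond_threshold (β b σ s : ℝ) (hβ : 0 < β)
    (hb : 0 ≤ b) (hs : 0 < s)
    (hout : (s - b) / Real.sqrt (s + σ ^ 2) > β) :
    HasDerivAt (deriv (fun s : ℝ => huber β ((s - b) / Real.sqrt (s + σ ^ 2))))
      (-(β * (s + 3 * b + 4 * σ ^ 2)) / (4 * (s + σ ^ 2) ^ ((5 : ℝ) / 2))) s ∧
    -(β * (s + 3 * b + 4 * σ ^ 2)) / (4 * (s + σ ^ 2) ^ ((5 : ℝ) / 2)) < 0 ∧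
    (∀ ε > 0, ¬ ConvexOn ℝ (Set.Ioo (s - ε) (s + ε))
      (fun s : ℝ => huber β ((s - b) / Real.sqrt (s + σ ^ 2)))) := by
  obtain ⟨hderiv, hneg, hconv⟩ :=
    huber_fidelity_nonconvex_beyond_threshold_general hβ (add_nonneg hb (sq_nonneg σ)) hout
  exact ⟨hderiv, hneg, fun ε hε => hconv _ (Ioo_mem_nhds (by linarith) (by linarith))⟩
end

section
/- Let T ≥ 0, L > 0, c ≥ 0, and let ρ : ℝ → ℝ be twice differentiable on (T, ∞) with ρ′(t) ≥ L and 0 ≤ ρ″(t) ≤ c/t² for all t > T. Fix b ≥ 0 and σ ∈ ℝ, and define ψ(s) = ρ((s − b)/√(s + σ²)) for s > −σ². Then there exists S such that for all s > S the function ψ is twice differentiable at s and ψ″(s) < 0. (In other words, a loss whose derivative stays bounded below by a positive constant while its second derivative decays faster than 1/t² yields a nonconvex fidelity for large signal values; convexity forces the loss to be eventually constant or to grow at least quadratically.) -/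
/-!
With `r s = (s - b) / √(s + v)`, the chain rule gives `(ρ ∘ r)'' = ρ''(r) r'² + ρ'(r) r''`.
If `ρ' > 0` and `t ρ''(t) ≤ κ ρ'(t)`, multiplying by `r > 0` bounds this by
`ρ'(r) (κ r'² + r r'')`. Since `r s ≈ √s`, the ratio `r r'' / r'²` tends to `-1`, so every
`κ < 1` gives a negative sign. The power `ρ t = t ^ p` has `κ = p - 1`, so the threshold `κ = 1`
is quadratic growth; under `ρ' ≥ L > 0` and `ρ'' ≤ c / t²` any `κ > 0` is admissible.
-/

open Filter Topology

theorem hasDerivAt_deriv_comp {𝕜 F : Type*} [NontriviallyNormedField 𝕜] [NormedAddCommGroup F]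
    [NormedSpace 𝕜 F] {f f' : 𝕜 → F} {f'' : F} {g g' : 𝕜 → 𝕜} {g'' x : 𝕜}
    (hf : ∀ᶠ y in 𝓝 (g x), HasDerivAt f (f' y) y) (hf' : HasDerivAt f' f'' (g x))
    (hg : ∀ᶠ y in 𝓝 x, HasDerivAt g (g' y) y) (hg' : HasDerivAt g' g'' x) :
    HasDerivAt (deriv (f ∘ g)) (g' x ^ 2 • f'' + g'' • f' (g x)) x := by
  have deriv_comp : deriv (f ∘ g) =ᶠ[𝓝 x] fun y => g' y • f' (g y) := by
    filter_upwards [hg.self_of_nhds.continuousAt.eventually hf, hg] with y hfy hgy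
    exact (hfy.scomp y hgy).deriv
  refine ((hg'.smul (hf'.scomp x hg.self_of_nhds)).congr_of_eventuallyEq deriv_comp).congr_deriv ?_
  rw [smul_smul, ← sq, Function.comp_apply]

theorem eventually_atTop_eventually_nhds {α : Type*} [TopologicalSpace α] [LinearOrder α]
    [ClosedIicTopology α] [NoMaxOrder α] [Nonempty α] {p : α → Prop}
    (hp : ∀ᶠ x in atTop, p x) : ∀ᶠ x in atTop, ∀ᶠ y in 𝓝 x, p y := by
  obtain ⟨a, ha⟩ := eventually_atTop.1 hp
  filter_upwards [eventually_gt_atTop a] with x hx using (eventually_ge_nhds hx).mono ha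

theorem sq_mul_add_mul_neg_of_mul_le {κ t p q d e : ℝ} (ht : 0 < t) (hp : 0 < p)
    (hq : t * q ≤ κ * p) (hde : κ * d ^ 2 + t * e < 0) : d ^ 2 * q + e * p < 0 := by
  refine neg_of_mul_neg_right (a := t) ?_ ht.le
  calc t * (d ^ 2 * q + e * p) = d ^ 2 * (t * q) + t * e * p := by ring
    _ ≤ d ^ 2 * (κ * p) + t * e * p := by gcongr
    _ = (κ * d ^ 2 + t * e) * p := by ring
    _ < 0 := mul_neg_of_neg_of_pos hde hp

theorem eventually_deriv_deriv_comp_neg {κ : ℝ} {f f' f'' g g' g'' : ℝ → ℝ}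
    (hf : ∀ᶠ t in atTop, HasDerivAt f (f' t) t) (hf' : ∀ᶠ t in atTop, HasDerivAt f' (f'' t) t)
    (hf'_pos : ∀ᶠ t in atTop, 0 < f' t) (hf'' : ∀ᶠ t in atTop, t * f'' t ≤ κ * f' t)
    (hg : ∀ᶠ s in atTop, HasDerivAt g (g' s) s) (hg' : ∀ᶠ s in atTop, HasDerivAt g' (g'' s) s)
    (hg'' : ∀ᶠ s in atTop, κ * g' s ^ 2 + g s * g'' s < 0) (hg_top : Tendsto g atTop atTop) :
    ∀ᶠ s in atTop, DifferentiableAt ℝ (f ∘ g) s ∧ DifferentiableAt ℝ (deriv (f ∘ g)) s ∧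
      deriv (deriv (f ∘ g)) s < 0 := by
  filter_upwards [hg_top.eventually (eventually_atTop_eventually_nhds hf), hg_top.eventually hf',
    hg_top.eventually hf'_pos, hg_top.eventually hf'', hg_top.eventually_gt_atTop 0,
    eventually_atTop_eventually_nhds hg, hg', hg'']
    with s hfs hf's hf's_pos hf''s hgs_pos hgs hg's hg''s
  have second_deriv := hasDerivAt_deriv_comp hfs hf's hgs hg's
  refine ⟨(hfs.self_of_nhds.comp s hgs.self_of_nhds).differentiableAt,
    second_deriv.differentiableAt, ?_⟩
  rw [second_deriv.deriv]
  exact sq_mul_add_mul_neg_of_mul_le hgs_pos hf's_pos hf''s hg''s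

theorem hasDerivAt_sqrt_add_const {s v : ℝ} (hs : s + v ≠ 0) :
    HasDerivAt (fun s => √(s + v)) (1 / (2 * √(s + v))) s :=
  ((hasDerivAt_id s).add_const v).sqrt hs

/-- The residual `s - b` of a signal value `s` against the data value `b`, divided by the
standard deviation of noise with variance `s + v`. The variance `v` stands for the `σ ^ 2` of a
noise parameter `σ`, but may be any real number. -/
noncomputable def standardizedResidual (b v s : ℝ) : ℝ := (s - b) / √(s + v)

namespace standardizedResidual

variable {v s : ℝ}

-- For `s + v ≤ 0` both sides are `0`, because `√(s + v) = 0` and `x / 0 = 0`.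
theorem eq_sqrt_sub_div_sqrt (b v s : ℝ) :
    standardizedResidual b v s = √(s + v) - (b + v) / √(s + v) := by
  rw [standardizedResidual, ← add_sub_add_right_eq_sub s b v, sub_div, Real.div_sqrt]

protected theorem tendsto_atTop (b v : ℝ) : Tendsto (standardizedResidual b v) atTop atTop := by
  have sqrt_tendsto : Tendsto (fun s => √(s + v)) atTop atTop :=
    Real.tendsto_sqrt_atTop.comp (tendsto_atTop_add_const_right atTop v tendsto_id)
  have := sqrt_tendsto.atTop_add (sqrt_tendsto.const_div_atTop (b + v)).neg
  simpa only [← sub_eq_add_neg, ← eq_sqrt_sub_div_sqrt] using this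

protected theorem hasDerivAt (b : ℝ) (hs : 0 < s + v) :
    HasDerivAt (standardizedResidual b v) ((s + b + 2 * v) / (2 * √(s + v) ^ 3)) s := by
  have sqrt_pos : 0 < √(s + v) := Real.sqrt_pos.2 hs
  have sq_sqrt : √(s + v) ^ 2 = s + v := Real.sq_sqrt hs.le
  refine (((hasDerivAt_id s).sub_const b).div (hasDerivAt_sqrt_add_const hs.ne')
    sqrt_pos.ne').congr_deriv ?_
  simp only [id]
  field_simp
  linear_combination 2 * sq_sqrt

theorem hasDerivAt_deriv (b : ℝ) (hs : 0 < s + v) :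
    HasDerivAt (fun s => (s + b + 2 * v) / (2 * √(s + v) ^ 3))
      (-(s + 3 * b + 4 * v) / (4 * √(s + v) ^ 5)) s := by
  have sqrt_pos : 0 < √(s + v) := Real.sqrt_pos.2 hs
  have sq_sqrt : √(s + v) ^ 2 = s + v := Real.sq_sqrt hs.le
  refine ((((hasDerivAt_id s).add_const b).add_const (2 * v)).div
    (((hasDerivAt_sqrt_add_const hs.ne').pow 3).const_mul 2)
    (mul_ne_zero two_ne_zero (pow_ne_zero 3 sqrt_pos.ne'))).congr_deriv ?_
  simp only [id, Pi.pow_apply]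
  push_cast
  field_simp
  linear_combination 8 * sq_sqrt

theorem mul_deriv_sq_add_mul_deriv_deriv (κ b : ℝ) (hs : 0 < s + v) :
    κ * ((s + b + 2 * v) / (2 * √(s + v) ^ 3)) ^ 2 +
        standardizedResidual b v s * (-(s + 3 * b + 4 * v) / (4 * √(s + v) ^ 5)) =
      (4 * (b + v) ^ 2 - (1 - κ) * (s + b + 2 * v) ^ 2) / (4 * √(s + v) ^ 6) := by
  rw [standardizedResidual]
  field_simp
  ring

theorem eventually_mul_deriv_sq_add_mul_deriv_deriv_neg {κ : ℝ} (hκ : κ < 1) (b v : ℝ) :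
    ∀ᶠ s in atTop, κ * ((s + b + 2 * v) / (2 * √(s + v) ^ 3)) ^ 2 +
      standardizedResidual b v s * (-(s + 3 * b + 4 * v) / (4 * √(s + v) ^ 5)) < 0 := by
  have numerator_tendsto : Tendsto (fun s => (1 - κ) * (s + b + 2 * v) ^ 2) atTop atTop :=
    ((tendsto_pow_atTop two_ne_zero).comp (tendsto_atTop_add_const_right atTop (2 * v)
      (tendsto_atTop_add_const_right atTop b tendsto_id))).const_mul_atTop (sub_pos.2 hκ)
  filter_upwards [numerator_tendsto.eventually_gt_atTop (4 * (b + v) ^ 2),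
    eventually_gt_atTop (-v)] with s hs hsv
  have hsv : 0 < s + v := neg_lt_iff_pos_add.1 hsv
  rw [mul_deriv_sq_add_mul_deriv_deriv κ b hsv]
  exact div_neg_of_neg_of_pos (sub_neg.2 hs) (by positivity)

end standardizedResidual

theorem eventually_mul_le_mul_of_le_div_sq {κ L c : ℝ} {f g : ℝ → ℝ} (hκ : 0 < κ) (hL : 0 < L)
    (hf : ∀ᶠ t in atTop, L ≤ f t) (hg : ∀ᶠ t in atTop, g t ≤ c / t ^ 2) :
    ∀ᶠ t in atTop, t * g t ≤ κ * f t := by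
  have div_lt : ∀ᶠ t in atTop, c / t < κ * L :=
    (tendsto_id.const_div_atTop c).eventually_lt_const (mul_pos hκ hL)
  filter_upwards [hf, hg, div_lt, eventually_gt_atTop 0] with t hft hgt hct ht
  calc t * g t ≤ t * (c / t ^ 2) := by gcongr
    _ = c / t := by field_simp
    _ ≤ κ * L := hct.le
    _ ≤ κ * f t := by gcongr

theorem slowly_growing_loss_yields_nonconvex_fidelity_general {κ : ℝ} (hκ : κ < 1)
    {ρ ρ' ρ'' : ℝ → ℝ}
    (hρ' : ∀ᶠ t in atTop, HasDerivAt ρ (ρ' t) t)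
    (hρ'' : ∀ᶠ t in atTop, HasDerivAt ρ' (ρ'' t) t)
    (hpos : ∀ᶠ t in atTop, 0 < ρ' t)
    (hgrowth : ∀ᶠ t in atTop, t * ρ'' t ≤ κ * ρ' t)
    (b v : ℝ) :
    ∀ᶠ s in atTop,
      DifferentiableAt ℝ (fun s : ℝ => ρ ((s - b) / √(s + v))) s ∧
      DifferentiableAt ℝ (deriv (fun s : ℝ => ρ ((s - b) / √(s + v)))) s ∧
      deriv (deriv (fun s : ℝ => ρ ((s - b) / √(s + v)))) s < 0 := by
  have variance_pos : ∀ᶠ s in atTop, 0 < s + v :=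
    (eventually_gt_atTop (-v)).mono fun _ => neg_lt_iff_pos_add.1
  exact eventually_deriv_deriv_comp_neg (g := standardizedResidual b v) hρ' hρ'' hpos hgrowth
    (variance_pos.mono fun _ => standardizedResidual.hasDerivAt b)
    (variance_pos.mono fun _ => standardizedResidual.hasDerivAt_deriv b)
    (standardizedResidual.eventually_mul_deriv_sq_add_mul_deriv_deriv_neg hκ b v)
    (standardizedResidual.tendsto_atTop b v)

/-- A loss ρ that is twice differentiable on (T, ∞) with derivative bounded below by a
positive constant L and second derivative decaying like c/t² yields, for any data value
b ≥ 0 and noise parameter σ, a robust scalar fidelity ψ(s) = ρ((s − b)/√(s + σ²)) whose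
second derivative is negative for all sufficiently large s: the fidelity is eventually
nonconvex. -/
theorem slowly_growing_loss_yields_nonconvex_fidelity
    (T L c : ℝ) (hT : 0 ≤ T) (hL : 0 < L) (hc : 0 ≤ c)
    (ρ ρ' ρ'' : ℝ → ℝ)
    (hρ' : ∀ t > T, HasDerivAt ρ (ρ' t) t)
    (hρ'' : ∀ t > T, HasDerivAt ρ' (ρ'' t) t)
    (hL' : ∀ t > T, L ≤ ρ' t)
    (hc' : ∀ t > T, 0 ≤ ρ'' t ∧ ρ'' t ≤ c / t ^ 2)
    (b σ : ℝ) (hb : 0 ≤ b) :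
    ∃ S : ℝ, ∀ s > S,
      DifferentiableAt ℝ (fun s : ℝ => ρ ((s - b) / Real.sqrt (s + σ ^ 2))) s ∧
      DifferentiableAt ℝ (deriv (fun s : ℝ => ρ ((s - b) / Real.sqrt (s + σ ^ 2)))) s ∧
      deriv (deriv (fun s : ℝ => ρ ((s - b) / Real.sqrt (s + σ ^ 2)))) s < 0 := by
  have above := eventually_gt_atTop T
  have growth := eventually_mul_le_mul_of_le_div_sq one_half_pos hL (above.mono hL')
    (above.mono fun t ht => (hc' t ht).2)
  obtain ⟨S, hS⟩ := eventually_atTop.1 <|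
    slowly_growing_loss_yields_nonconvex_fidelity_general one_half_lt_one (above.mono hρ')
      (above.mono hρ'') (above.mono fun t ht => hL.trans_le (hL' t ht)) growth b (σ ^ 2)
  exact ⟨S, fun s hs => hS s hs.le⟩
end

section
/- Let A ∈ ℝ^{m×n}, b ∈ ℝ^m, σ ∈ ℝ, and define J(x) = Σ_{i=1}^m ((Ax)_i − b_i)²/(2((Ax)_i + σ²)). If x ∈ ℝ^n satisfies (Ax)_i + σ² > 0 for all i, then for every direction v ∈ ℝ^n the function t ↦ J(x + t v) is twice differentiable at t = 0 and its second derivative at 0 equals Σ_{i=1}^m D_{ii} (Av)_i², where D_{ii} = (b_i + σ²)²/((Ax)_i + σ²)³; that is, the Hessian quadratic form of J at x is v ↦ vᵀ AᵀDA v. -/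
open Matrix

/-!
Since `y - b = (y + s) - (b + s)`, the loss `(y - b)² / (2 (y + s))` equals
`(y + s) / 2 - (b + s) + (b + s)² / (2 (y + s))`, whose second derivative is
`(b + s)² / (y + s)³`. Along the line `t ↦ x + t v` the coordinates of `A (x + t v)` are affine
in `t` with slopes `(A v)ᵢ`, so each term contributes its second derivative times `(A v)ᵢ²`.
-/

open scoped Topology

theorem dotProduct_transpose_mul_diagonal_mul_mulVec {R ι κ : Type*} [CommSemiring R]
    [Fintype ι] [DecidableEq ι] [Fintype κ] (A : Matrix ι κ R) (d : ι → R) (v : κ → R) :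
    v ⬝ᵥ ((Aᵀ * diagonal d * A) *ᵥ v) = ∑ i, d i * (A *ᵥ v) i ^ 2 := by
  calc v ⬝ᵥ ((Aᵀ * diagonal d * A) *ᵥ v)
      = (A *ᵥ v) ⬝ᵥ (diagonal d *ᵥ (A *ᵥ v)) := by
        rw [← mulVec_mulVec, ← mulVec_mulVec, dotProduct_mulVec, vecMul_transpose]
    _ = ∑ i, (A *ᵥ v) i * (d i * (A *ᵥ v) i) := by
        simp only [dotProduct, mulVec_diagonal]
    _ = ∑ i, d i * (A *ᵥ v) i ^ 2 := Finset.sum_congr rfl fun i _ => by ring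

variable {𝕜 ι κ : Type*} [NontriviallyNormedField 𝕜] [Fintype κ]

section SeparableAlongLine

variable (A : Matrix ι κ 𝕜) (x v : κ → 𝕜)

theorem hasDerivAt_mulVec_add_smul (i : ι) (t : 𝕜) :
    HasDerivAt (fun t : 𝕜 => (A *ᵥ (x + t • v)) i) ((A *ᵥ v) i) t := by
  simpa [mulVec_add, mulVec_smul] using
    ((hasDerivAt_id t).mul_const ((A *ᵥ v) i)).const_add ((A *ᵥ x) i)

variable [Fintype ι] {A x v}

theorem hasDerivAt_sum_comp_mulVec_add_smul {f : ι → 𝕜 → 𝕜} {f' : ι → 𝕜} {t : 𝕜}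
    (hf : ∀ i, HasDerivAt (f i) (f' i) ((A *ᵥ (x + t • v)) i)) :
    HasDerivAt (fun t : 𝕜 => ∑ i, f i ((A *ᵥ (x + t • v)) i)) (∑ i, f' i * (A *ᵥ v) i) t :=
  HasDerivAt.fun_sum fun i _ => (hf i).comp t (hasDerivAt_mulVec_add_smul A x v i t)

theorem hasDerivAt_deriv_sum_comp_mulVec_add_smul {f f' : ι → 𝕜 → 𝕜} {f'' : ι → 𝕜} {t : 𝕜}
    (hf : ∀ i, ∀ᶠ y in 𝓝 ((A *ᵥ (x + t • v)) i), HasDerivAt (f i) (f' i y) y)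
    (hf' : ∀ i, HasDerivAt (f' i) (f'' i) ((A *ᵥ (x + t • v)) i)) :
    HasDerivAt (deriv fun t : 𝕜 => ∑ i, f i ((A *ᵥ (x + t • v)) i))
      (∑ i, f'' i * (A *ᵥ v) i ^ 2) t := by
  have hasDerivAt_near : ∀ᶠ u in 𝓝 t, ∀ i,
      HasDerivAt (f i) (f' i ((A *ᵥ (x + u • v)) i)) ((A *ᵥ (x + u • v)) i) :=
    Filter.eventually_all.2 fun i =>
      (hasDerivAt_mulVec_add_smul A x v i t).continuousAt.eventually (hf i)
  have deriv_eq : (deriv fun t : 𝕜 => ∑ i, f i ((A *ᵥ (x + t • v)) i)) =ᶠ[𝓝 t]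
      fun u => ∑ i, f' i ((A *ᵥ (x + u • v)) i) * (A *ᵥ v) i :=
    hasDerivAt_near.mono fun _ hu => (hasDerivAt_sum_comp_mulVec_add_smul hu).deriv
  have second_deriv : HasDerivAt (fun u => ∑ i, f' i ((A *ᵥ (x + u • v)) i) * (A *ᵥ v) i)
      (∑ i, f'' i * (A *ᵥ v) i ^ 2) t := by
    simpa only [mul_assoc, ← sq] using
      hasDerivAt_sum_comp_mulVec_add_smul fun i => (hf' i).mul_const ((A *ᵥ v) i)
  exact second_deriv.congr_of_eventuallyEq deriv_eq

end SeparableAlongLine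

/-- The weighted least-squares loss of predicting the observation `b` by `y`, with variance
`y + s`; the offset `s` plays the role of `σ²`. -/
def wlsLoss (b s y : 𝕜) : 𝕜 :=
  (y - b) ^ 2 / (2 * (y + s))

/-- The derivative of `wlsLoss b s` in the prediction, in the partial-fraction form that is
easiest to differentiate again; it is meaningful where `y + s ≠ 0`. -/
def wlsLossDeriv (b s y : 𝕜) : 𝕜 :=
  (1 - (b + s) ^ 2 / (y + s) ^ 2) / 2

/-- The weighted least-squares fidelity `J` of the linear model `b ≈ A x`, with a separate
variance offset `s i` for each observation. -/
def wlsFidelity [Fintype ι] (A : Matrix ι κ 𝕜) (b s : ι → 𝕜) (x : κ → 𝕜) : 𝕜 :=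
  ∑ i, wlsLoss (b i) (s i) ((A *ᵥ x) i)

section Loss

variable [NeZero (2 : 𝕜)] {s y : 𝕜} (b : 𝕜)

theorem hasDerivAt_wlsLoss (h : y + s ≠ 0) :
    HasDerivAt (wlsLoss b s) (wlsLossDeriv b s y) y := by
  have numerator : HasDerivAt (fun y => (y - b) ^ 2) (2 * (y - b)) y := by
    simpa using ((hasDerivAt_id y).sub_const b).fun_pow 2
  have denominator : HasDerivAt (fun y => 2 * (y + s)) 2 y := by
    simpa using ((hasDerivAt_id y).add_const s).const_mul 2
  refine (numerator.fun_div denominator (mul_ne_zero two_ne_zero h)).congr_deriv ?_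
  rw [wlsLossDeriv]
  field_simp
  ring

theorem hasDerivAt_wlsLossDeriv (h : y + s ≠ 0) :
    HasDerivAt (wlsLossDeriv b s) ((b + s) ^ 2 / (y + s) ^ 3) y := by
  have denominator : HasDerivAt (fun y => (y + s) ^ 2) (2 * (y + s)) y := by
    simpa using ((hasDerivAt_id y).add_const s).fun_pow 2
  refine ((((hasDerivAt_const y ((b + s) ^ 2)).fun_div denominator
    (pow_ne_zero 2 h)).const_sub 1).div_const 2).congr_deriv ?_
  field_simp
  ring

end Loss

theorem wls_fidelity_hessian_quadratic_form_general [NeZero (2 : 𝕜)] [Fintype ι]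
    [DecidableEq ι] (A : Matrix ι κ 𝕜) (b s : ι → 𝕜) (x : κ → 𝕜)
    (hx : ∀ i, (A *ᵥ x) i + s i ≠ 0) (v : κ → 𝕜) :
    DifferentiableAt 𝕜 (fun t : 𝕜 => wlsFidelity A b s (x + t • v)) 0 ∧
      HasDerivAt (deriv fun t : 𝕜 => wlsFidelity A b s (x + t • v))
        (∑ i, (b i + s i) ^ 2 / ((A *ᵥ x) i + s i) ^ 3 * (A *ᵥ v) i ^ 2) 0 ∧
      ∑ i, (b i + s i) ^ 2 / ((A *ᵥ x) i + s i) ^ 3 * (A *ᵥ v) i ^ 2 =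
        v ⬝ᵥ ((Aᵀ * diagonal (fun i => (b i + s i) ^ 2 / ((A *ᵥ x) i + s i) ^ 3) * A) *ᵥ v) := by
  have base : x + (0 : 𝕜) • v = x := by rw [zero_smul, add_zero]
  have ne_near (i : ι) : ∀ᶠ y in 𝓝 ((A *ᵥ x) i), y + s i ≠ 0 :=
    (continuous_add_const (s i)).continuousAt.eventually_ne (hx i)
  refine ⟨?_, ?_, (dotProduct_transpose_mul_diagonal_mul_mulVec A _ v).symm⟩
  · exact (hasDerivAt_sum_comp_mulVec_add_smul fun i =>
      hasDerivAt_wlsLoss (b i) (by simpa only [base] using hx i)).differentiableAt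
  · refine hasDerivAt_deriv_sum_comp_mulVec_add_smul
      (f' := fun i => wlsLossDeriv (b i) (s i)) (fun i => ?_) (fun i => ?_) <;> rw [base]
    · exact (ne_near i).mono fun _ hy => hasDerivAt_wlsLoss (b i) hy
    · exact hasDerivAt_wlsLossDeriv (b i) (hx i)

/-- For the weighted least-squares fidelity J(x) = Σᵢ ((Ax)ᵢ − bᵢ)²/(2((Ax)ᵢ + σ²)) and any
point x with (Ax)ᵢ + σ² > 0, the function t ↦ J(x + t v) is twice differentiable at 0 for
every direction v, with second derivative Σᵢ D_ii (Av)ᵢ², D_ii = (bᵢ + σ²)²/((Ax)ᵢ + σ²)³;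
that is, the Hessian quadratic form of J at x is v ↦ vᵀAᵀDAv. -/
theorem wls_fidelity_hessian_quadratic_form
    (m n : ℕ) (A : Matrix (Fin m) (Fin n) ℝ) (b : Fin m → ℝ) (σ : ℝ)
    (x : Fin n → ℝ) (hpos : ∀ i, 0 < A.mulVec x i + σ ^ 2) :
    ∀ v : Fin n → ℝ,
      DifferentiableAt ℝ
        (fun t : ℝ =>
          ∑ i, (A.mulVec (x + t • v) i - b i) ^ 2 / (2 * (A.mulVec (x + t • v) i + σ ^ 2))) 0 ∧
      HasDerivAt
        (deriv (fun t : ℝ =>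
          ∑ i, (A.mulVec (x + t • v) i - b i) ^ 2 / (2 * (A.mulVec (x + t • v) i + σ ^ 2))))
        (∑ i, (b i + σ ^ 2) ^ 2 / (A.mulVec x i + σ ^ 2) ^ 3 * (A.mulVec v i) ^ 2) 0 ∧
      (∑ i, (b i + σ ^ 2) ^ 2 / (A.mulVec x i + σ ^ 2) ^ 3 * (A.mulVec v i) ^ 2) =
        v ⬝ᵥ ((Aᵀ *
          Matrix.diagonal (fun i => (b i + σ ^ 2) ^ 2 / (A.mulVec x i + σ ^ 2) ^ 3) *
          A).mulVec v) :=
  wls_fidelity_hessian_quadratic_form_general A b (fun _ => σ ^ 2) x fun i => (hpos i).ne'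
end
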